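/- arXiv:2505.16071 — 2 statements merged into one kernel-verified Lean document; each statement's English description precedes it below -/
import Mathlib

section
/- Let k₁, k₂, k₃, k₄ ∈ ℝ³ satisfy k₁ + k₂ + k₃ + k₄ = 0, and suppose k₁ + k₂ = s ŝ for some real s > 0 and unit vector ŝ ∈ ℝ³. Let n̂ be a unit vector not parallel to ŝ. Then the helicity sum Σ_{h ∈ {+1,−1}} h · conj(k₁·ê^{h}(ŝ)) · conj(k₂·ê^{h}(ŝ)) · (k₃·ê^{h}(ŝ)) · (k₄·ê^{h}(ŝ)) = i · [ŝ·(k₂×k₄)] · [ k₁·k₃ − (k₁·ŝ)(k₃·ŝ) ], as an identity in ℂ. -/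
open scoped BigOperators

noncomputable section

/-- Euclidean dot product on ℝ³ (realised as `Fin 3 → ℝ`). -/
def dot3 (v w : Fin 3 → ℝ) : ℝ := ∑ i, v i * w i

/-- Cross product on ℝ³. -/
def cross3 (v w : Fin 3 → ℝ) : Fin 3 → ℝ :=
  ![v 1 * w 2 - v 2 * w 1, v 2 * w 0 - v 0 * w 2, v 0 * w 1 - v 1 * w 0]

/-- The complex polarisation vector
`ê^{h}(ŝ) = (n̂ − (n̂·ŝ)ŝ + h i ŝ×n̂)/√(2(1−(n̂·ŝ)²))` for helicity `h = ±1`. -/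
def polVec (h : ℝ) (s n : Fin 3 → ℝ) : Fin 3 → ℂ := fun i =>
  (((n i - dot3 n s * s i : ℝ) : ℂ) + (h : ℂ) * Complex.I * ((cross3 s n i : ℝ) : ℂ)) /
    ((Real.sqrt (2 * (1 - dot3 n s ^ 2)) : ℝ) : ℂ)

/-- The bilinear dot product of a real vector with a complex vector. -/
def dotRC (v : Fin 3 → ℝ) (z : Fin 3 → ℂ) : ℂ := ∑ i, (v i : ℂ) * z i

lemma aux_pos (s n : Fin 3 → ℝ) (hs : dot3 s s = 1) (hn : dot3 n n = 1)
    (hpar : ¬ ∃ c : ℝ, n = c • s) : 0 < 1 - dot3 n s ^ 2 := by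
  have key : 1 - dot3 n s ^ 2 = (n 0 - dot3 n s * s 0) ^ 2 + (n 1 - dot3 n s * s 1) ^ 2
      + (n 2 - dot3 n s * s 2) ^ 2 := by
    have hc : dot3 n s = n 0 * s 0 + n 1 * s 1 + n 2 * s 2 := by
      simp [dot3, Fin.sum_univ_three]
    simp only [dot3, Fin.sum_univ_three] at hs hn
    generalize dot3 n s = c at *
    linear_combination (-1) * hn - c ^ 2 * hs - 2 * c * hc
  by_contra hneg
  have h0 := sq_nonneg (n 0 - dot3 n s * s 0)
  have h1 := sq_nonneg (n 1 - dot3 n s * s 1)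
  have h2 := sq_nonneg (n 2 - dot3 n s * s 2)
  refine hpar ⟨dot3 n s, ?_⟩
  have e0 : n 0 - dot3 n s * s 0 = 0 := pow_eq_zero_iff (two_ne_zero) |>.1 (by linarith)
  have e1 : n 1 - dot3 n s * s 1 = 0 := pow_eq_zero_iff (two_ne_zero) |>.1 (by linarith)
  have e2 : n 2 - dot3 n s * s 2 = 0 := pow_eq_zero_iff (two_ne_zero) |>.1 (by linarith)
  funext i
  fin_cases i <;> simp <;> linarith

/-- The real projected component. -/
def aC (k s n : Fin 3 → ℝ) : ℝ := dot3 k n - dot3 n s * dot3 k s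

/-- The imaginary projected component. -/
def bC (k s n : Fin 3 → ℝ) : ℝ := dot3 k (cross3 s n)

lemma aux_dot (h : ℝ) (k s n : Fin 3 → ℝ) : dotRC k (polVec h s n) =
    ((aC k s n : ℂ) + h * Complex.I * (bC k s n : ℂ)) /
      ((Real.sqrt (2 * (1 - dot3 n s ^ 2)) : ℝ) : ℂ) := by
  simp only [dotRC, polVec, aC, bC]
  generalize Real.sqrt (2 * (1 - dot3 n s ^ 2)) = r
  generalize dot3 n s = c
  simp only [dot3, Fin.sum_univ_three]
  push_cast
  ring

lemma aux_P (k l s n : Fin 3 → ℝ) (hs : dot3 s s = 1) (hn : dot3 n n = 1) :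
    aC k s n * aC l s n + bC k s n * bC l s n =
      (1 - dot3 n s ^ 2) * (dot3 k l - dot3 k s * dot3 l s) := by
  have gram : bC k s n * bC l s n =
      dot3 k l * (dot3 s s * dot3 n n - dot3 n s ^ 2)
      - dot3 k s * (dot3 l s * dot3 n n - dot3 n s * dot3 l n)
      + dot3 k n * (dot3 l s * dot3 n s - dot3 s s * dot3 l n) := by
    simp [bC, dot3, cross3, Fin.sum_univ_three]
    ring
  rw [gram, hs, hn]
  simp only [aC]
  ring

lemma aux_Q (k l s n : Fin 3 → ℝ) (hs : dot3 s s = 1) (hn : dot3 n n = 1) :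
    aC k s n * bC l s n - bC k s n * aC l s n =
      (1 - dot3 n s ^ 2) * dot3 s (cross3 k l) := by
  have h : aC k s n * bC l s n - bC k s n * aC l s n =
      (dot3 n n - dot3 n s ^ 2) * dot3 s (cross3 k l)
      - (dot3 n s - dot3 n s * dot3 s s) * dot3 n (cross3 k l) := by
    simp [aC, bC, dot3, cross3, Fin.sum_univ_three]
    ring
  rw [h, hs, hn]
  ring

/-- The polarisation sum identity:
`Σ_{h=±1} h conj(k₁·ê^h(ŝ)) conj(k₂·ê^h(ŝ)) (k₃·ê^h(ŝ)) (k₄·ê^h(ŝ))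
  = i [ŝ·(k₂×k₄)] [k₁·k₃ − (k₁·ŝ)(k₃·ŝ)]`. -/
theorem polVec_helicity_sum (k₁ k₂ k₃ k₄ : Fin 3 → ℝ)
    (hsum : k₁ + k₂ + k₃ + k₄ = 0)
    (s : ℝ) (shat : Fin 3 → ℝ) (hs : 0 < s) (hshat : dot3 shat shat = 1)
    (heq : k₁ + k₂ = s • shat)
    (n : Fin 3 → ℝ) (hn : dot3 n n = 1) (hpar : ¬ ∃ c : ℝ, n = c • shat) :
    (1 : ℂ) * (starRingEnd ℂ (dotRC k₁ (polVec 1 shat n)) *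
        starRingEnd ℂ (dotRC k₂ (polVec 1 shat n)) *
        dotRC k₃ (polVec 1 shat n) * dotRC k₄ (polVec 1 shat n))
      + (-1 : ℂ) * (starRingEnd ℂ (dotRC k₁ (polVec (-1) shat n)) *
        starRingEnd ℂ (dotRC k₂ (polVec (-1) shat n)) *
        dotRC k₃ (polVec (-1) shat n) * dotRC k₄ (polVec (-1) shat n))
      = Complex.I * ((dot3 shat (cross3 k₂ k₄) : ℝ) : ℂ) *
          ((dot3 k₁ k₃ - dot3 k₁ shat * dot3 k₃ shat : ℝ) : ℂ) := by
  have hD := aux_pos shat n hshat hn hpar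
  have hP := aux_P k₁ k₃ shat n hshat hn
  have hQ := aux_Q k₁ k₃ shat n hshat hn
  have hk2 : k₂ = s • shat - k₁ := by rw [← heq]; abel
  have hk4 : k₄ = -(s • shat) - k₃ := by
    rw [← heq, eq_sub_iff_add_eq, eq_neg_iff_add_eq_zero, ← hsum]; abel
  have hX : dot3 shat (cross3 k₂ k₄) = dot3 shat (cross3 k₁ k₃) := by
    rw [hk2, hk4]
    simp [dot3, cross3, Fin.sum_univ_three]
    ring
  have ha2 : aC k₂ shat n = -aC k₁ shat n := by
    have : aC k₂ shat n = s * dot3 n shat * (1 - dot3 shat shat) - aC k₁ shat n := by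
      rw [hk2]; simp [aC, dot3, Fin.sum_univ_three]; ring
    rw [this, hshat]; ring
  have ha4 : aC k₄ shat n = -aC k₃ shat n := by
    have : aC k₄ shat n = -s * dot3 n shat * (1 - dot3 shat shat) - aC k₃ shat n := by
      rw [hk4]; simp [aC, dot3, Fin.sum_univ_three]; ring
    rw [this, hshat]; ring
  have hb2 : bC k₂ shat n = -bC k₁ shat n := by
    rw [hk2]; simp [bC, dot3, cross3, Fin.sum_univ_three]; ring
  have hb4 : bC k₄ shat n = -bC k₃ shat n := by
    rw [hk4]; simp [bC, dot3, cross3, Fin.sum_univ_three]; ring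
  rw [hX]
  simp only [aux_dot, ha2, ha4, hb2, hb4]
  have hr : Real.sqrt (2 * (1 - dot3 n shat ^ 2)) ^ 2 = 2 * (1 - dot3 n shat ^ 2) :=
    Real.sq_sqrt (by linarith)
  have hr0 : Real.sqrt (2 * (1 - dot3 n shat ^ 2)) ≠ 0 :=
    (Real.sqrt_pos.2 (by linarith)).ne'
  generalize Real.sqrt (2 * (1 - dot3 n shat ^ 2)) = r at *
  generalize 1 - dot3 n shat ^ 2 = D at *
  generalize dot3 shat (cross3 k₁ k₃) = Y at *
  generalize dot3 k₁ k₃ - dot3 k₁ shat * dot3 k₃ shat = Z at *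
  generalize aC k₁ shat n = a at *
  generalize aC k₃ shat n = a3 at *
  generalize bC k₁ shat n = b at *
  generalize bC k₃ shat n = b3 at *
  have hrc0 : (r : ℂ) ≠ 0 := by exact_mod_cast hr0
  have hrr : 4 * ((a * a3 + b * b3) * (a * b3 - b * a3)) = r ^ 4 * (Y * Z) := by
    rw [hP, hQ, show r ^ 4 = (r ^ 2) ^ 2 by ring, hr]; ring
  have hrC : 4 * (((a : ℂ) * a3 + b * b3) * (a * b3 - b * a3)) = (r : ℂ) ^ 4 * (Y * Z) := by
    exact_mod_cast hrr
  simp only [map_div₀, map_add, map_mul, Complex.conj_ofReal, Complex.conj_I]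
  push_cast
  field_simp
  ring_nf
  simp only [Complex.I_pow_three]
  linear_combination Complex.I * hrC

end
end

section
/- Let H, M, κ, φ̇₀ be positive reals. Let k₁, k₂, k₃, k₄ ∈ ℝ³ be nonzero vectors with k₁ + k₂ + k₃ + k₄ = 0 and k₁ + k₂ ≠ 0; put s := ‖k₁+k₂‖, ŝ := (k₁+k₂)/s, kₐ := ‖kₐ‖, k̂ₐ := kₐ/kₐ, E_L := k₁+k₂+s, e₂ := k₁k₂ + s(k₁+k₂), e₃ := k₁k₂s, E_R := k₃+k₄+s, ẽ₂ := k₃k₄ + s(k₃+k₄), ẽ₃ := k₃k₄s. Let n̂ be a unit vector not parallel to ŝ and, for h ∈ {+1,−1}, define: the graviton power spectrum B_γγ(s) := H²/(M²s³); its parity-odd Chern–Simons correction δB^{(h)}_γγ(s) := h·π·κ·H³/(M²s³); the left mixed bispectrum B_L^{(h)} := (H⁶/(2M²φ̇₀²))·√2·conj(k₁·ê^{h}(ŝ))·conj(k₂·ê^{h}(ŝ))·(−E_L³ + E_L e₂ + e₃)/(k₁³k₂³s³·E_L²); and the right mixed bispectrum B_R^{(h)} := (H⁶/(2M²φ̇₀²))·√2·(k₃·ê^{h}(ŝ))·(k₄·ê^{h}(ŝ))·(−E_R³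 + E_R ẽ₂ + ẽ₃)/(k₃³k₄³s³·E_R²). Then the s-channel correlator-to-correlator factorisation (double copy) identity holds: Σ_{h∈{+1,−1}} B_L^{(h)} · δB^{(h)}_γγ(s) · B_R^{(h)} / (B_γγ(s))² = i·(H/φ̇₀)⁴·(π κ H⁷/(2M²)) · [ k̂₁·k̂₃ − (k̂₁·ŝ)(k̂₃·ŝ) ] · [ ŝ·(k̂₂×k̂₄) ] · (E_L³ − E_L e₂ − e₃)(E_R³ − E_R ẽ₂ − ẽ₃) / ( (k₁k₂k₃k₄)² · s³ · E_L² · E_R² ), as an identity in ℂ. This is the exact rational, factorised form of the s-channel parity-odd curvature trispectrum in dynamical Chern–Simons gravity, expressed entirely through the graviton power spectrum, its parity-odd correction, and the Maldacena curvature–graviton bispectrum. -/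
open scoped BigOperators

noncomputable section

/-- Euclidean norm on ℝ³. -/
def norm3 (v : Fin 3 → ℝ) : ℝ := Real.sqrt (∑ i, v i ^ 2)

/-- The unit vector in the direction of `v`. -/
def unit3 (v : Fin 3 → ℝ) : Fin 3 → ℝ := fun i => v i / norm3 v

lemma norm3_pos_aux {v : Fin 3 → ℝ} (hv : v ≠ 0) : 0 < norm3 v := by
  unfold norm3
  apply Real.sqrt_pos.mpr
  obtain ⟨j, hj⟩ := Function.ne_iff.mp hv
  exact Finset.sum_pos' (fun i _ => sq_nonneg _)
    ⟨j, Finset.mem_univ j, by have : v j ≠ 0 := hj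
                              positivity⟩

lemma dot3_unit_self_aux {v : Fin 3 → ℝ} (hv : v ≠ 0) : dot3 (unit3 v) (unit3 v) = 1 := by
  have h := norm3_pos_aux hv
  have h2 : norm3 v ^ 2 = ∑ i, v i ^ 2 :=
    Real.sq_sqrt (Finset.sum_nonneg fun i _ => sq_nonneg _)
  simp only [dot3, unit3, Fin.sum_univ_three] at *
  field_simp
  linarith

/-- Real part of the numerator of the contraction. -/
def polA (s n k : Fin 3 → ℝ) : ℝ := dot3 k n - dot3 n s * dot3 k s

/-- Imaginary part of the numerator of the contraction. -/
def polB (s n k : Fin 3 → ℝ) : ℝ := dot3 k (cross3 s n)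

lemma dotRC_pol_aux (h : ℝ) (s n k : Fin 3 → ℝ) :
    dotRC k (polVec h s n) = ((polA s n k : ℂ) + (h : ℂ) * Complex.I * (polB s n k : ℂ)) /
      ((Real.sqrt (2 * (1 - dot3 n s ^ 2)) : ℝ) : ℂ) := by
  simp only [dotRC, polVec, polA, polB, dot3, Fin.sum_univ_three]
  push_cast
  ring

lemma gram1_aux (s n k q : Fin 3 → ℝ) (hs : dot3 s s = 1) (hn : dot3 n n = 1) :
    polA s n k * polA s n q + polB s n k * polB s n q
      = (1 - dot3 n s ^ 2) * (dot3 k q - dot3 k s * dot3 q s) := by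
  have hB : polB s n k * polB s n q
      = dot3 k q * (dot3 s s * dot3 n n - dot3 n s ^ 2)
        - dot3 k s * (dot3 q s * dot3 n n - dot3 n s * dot3 q n)
        + dot3 k n * (dot3 q s * dot3 n s - dot3 s s * dot3 q n) := by
    simp [polB, dot3, cross3, Fin.sum_univ_three]
    ring
  rw [hB, hs, hn]
  unfold polA
  ring

lemma gram2_aux (s n k q : Fin 3 → ℝ) (hs : dot3 s s = 1) (hn : dot3 n n = 1) :
    polA s n k * polB s n q - polB s n k * polA s n q
      = (1 - dot3 n s ^ 2) * dot3 s (cross3 k q) := by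
  have hB : polA s n k * polB s n q - polB s n k * polA s n q
      = (dot3 n n - dot3 n s ^ 2) * dot3 s (cross3 k q)
        + dot3 n s * (dot3 s s - 1) * dot3 n (cross3 k q) := by
    simp [polA, polB, dot3, cross3, Fin.sum_univ_three]
    ring
  rw [hB, hs, hn]
  ring

lemma polA_opp_aux (s n k q : Fin 3 → ℝ) (c : ℝ) (hs : dot3 s s = 1)
    (h : ∀ i, q i = c * s i - k i) : polA s n q = - polA s n k := by
  have : polA s n q = c * (dot3 n s - dot3 n s * dot3 s s) - polA s n k := by
    simp only [polA, dot3, Fin.sum_univ_three, h]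
    ring
  rw [this, hs]
  ring

lemma polB_opp_aux (s n k q : Fin 3 → ℝ) (c : ℝ)
    (h : ∀ i, q i = c * s i - k i) : polB s n q = - polB s n k := by
  simp [polB, dot3, cross3, Fin.sum_univ_three, h]
  ring

lemma cross_opp_aux (s k q k' q' : Fin 3 → ℝ) (c d : ℝ)
    (h : ∀ i, k' i = c * s i - k i) (h' : ∀ i, q' i = d * s i - q i) :
    dot3 s (cross3 k' q') = dot3 s (cross3 k q) := by
  simp [dot3, cross3, Fin.sum_univ_three, h, h']
  ring

lemma one_sub_pos_aux (s n : Fin 3 → ℝ) (hs : dot3 s s = 1) (hn : dot3 n n = 1)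
    (hp : ¬ ∃ c : ℝ, n = c • s) : 0 < 1 - dot3 n s ^ 2 := by
  have e : ∑ i, (n i - dot3 n s * s i) ^ 2
      = dot3 n n - 2 * dot3 n s * dot3 n s + dot3 n s ^ 2 * dot3 s s := by
    simp only [dot3, Fin.sum_univ_three]
    ring
  have e2 : 1 - dot3 n s ^ 2 = ∑ i, (n i - dot3 n s * s i) ^ 2 := by
    rw [e, hs, hn]
    ring
  rw [e2]
  have hne : ∃ j, n j - dot3 n s * s j ≠ 0 := by
    by_contra! hc
    exact hp ⟨dot3 n s, funext fun i => by
      simp only [Pi.smul_apply, smul_eq_mul]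
      linarith [hc i]⟩
  obtain ⟨j, hj⟩ := hne
  exact Finset.sum_pos' (fun i _ => sq_nonneg _) ⟨j, Finset.mem_univ j, by positivity⟩

lemma hel_sum_aux (A₁ B₁ A₃ B₃ r P T : ℝ) (hr : 0 < r)
    (h1 : A₁ * A₃ + B₁ * B₃ = r * P) (h2 : A₁ * B₃ - B₁ * A₃ = r * T) (R : ℂ)
    (hR : R ^ 2 = 2 * (r : ℂ)) :
    ((A₁ : ℂ) - Complex.I * B₁) / R * (-((A₁ : ℂ) - Complex.I * B₁) / R) *
        (((A₃ : ℂ) + Complex.I * B₃) / R) * (-((A₃ : ℂ) + Complex.I * B₃) / R)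
      - ((A₁ : ℂ) + Complex.I * B₁) / R * (-((A₁ : ℂ) + Complex.I * B₁) / R) *
        (((A₃ : ℂ) - Complex.I * B₃) / R) * (-((A₃ : ℂ) - Complex.I * B₃) / R)
      = Complex.I * P * T := by
  have hr' : (r : ℂ) ≠ 0 := by exact_mod_cast hr.ne'
  have hR0 : R ≠ 0 := by
    rintro rfl
    apply hr'
    simpa using hR.symm
  have h1' : (A₁ : ℂ) * A₃ + B₁ * B₃ = r * P := by exact_mod_cast h1
  have h2' : (A₁ : ℂ) * B₃ - B₁ * A₃ = r * T := by exact_mod_cast h2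
  have hR4 : R ^ 4 = 4 * (r : ℂ) ^ 2 := by
    rw [show R ^ 4 = (R ^ 2) ^ 2 by ring, hR]
    ring
  have c1 : ((A₁ : ℂ) - Complex.I * B₁) * ((A₃ : ℂ) + Complex.I * B₃)
      = r * P + Complex.I * (r * T) := by
    rw [← h1', ← h2']
    linear_combination (-(B₁ : ℂ) * B₃) * Complex.I_sq
  have c2 : ((A₁ : ℂ) + Complex.I * B₁) * ((A₃ : ℂ) - Complex.I * B₃)
      = r * P - Complex.I * (r * T) := by
    rw [← h1', ← h2']
    linear_combination (-(B₁ : ℂ) * B₃) * Complex.I_sq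
  calc _ = ((((A₁ : ℂ) - Complex.I * B₁) * ((A₃ : ℂ) + Complex.I * B₃)) ^ 2
        - (((A₁ : ℂ) + Complex.I * B₁) * ((A₃ : ℂ) - Complex.I * B₃)) ^ 2) / R ^ 4 := by
        field_simp
    _ = _ := by
        rw [c1, c2, hR4]
        field_simp
        ring

lemma hel_key_aux (s n k₁ k₂ k₃ k₄ : Fin 3 → ℝ) (c d : ℝ)
    (hs : dot3 s s = 1) (hn : dot3 n n = 1) (hp : ¬ ∃ c : ℝ, n = c • s)
    (h2 : ∀ i, k₂ i = c * s i - k₁ i) (h4 : ∀ i, k₄ i = d * s i - k₃ i) :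
    starRingEnd ℂ (dotRC k₁ (polVec 1 s n)) * starRingEnd ℂ (dotRC k₂ (polVec 1 s n)) *
        dotRC k₃ (polVec 1 s n) * dotRC k₄ (polVec 1 s n)
      - starRingEnd ℂ (dotRC k₁ (polVec (-1) s n)) * starRingEnd ℂ (dotRC k₂ (polVec (-1) s n)) *
        dotRC k₃ (polVec (-1) s n) * dotRC k₄ (polVec (-1) s n)
      = Complex.I * ((dot3 k₁ k₃ - dot3 k₁ s * dot3 k₃ s : ℝ) : ℂ)
        * ((dot3 s (cross3 k₂ k₄) : ℝ) : ℂ) := by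
  have hr := one_sub_pos_aux s n hs hn hp
  rw [cross_opp_aux s k₁ k₃ k₂ k₄ c d h2 h4]
  have hR : ((Real.sqrt (2 * (1 - dot3 n s ^ 2)) : ℝ) : ℂ) ^ 2
      = 2 * ((1 - dot3 n s ^ 2 : ℝ) : ℂ) := by
    have : (Real.sqrt (2 * (1 - dot3 n s ^ 2))) ^ 2 = 2 * (1 - dot3 n s ^ 2) :=
      Real.sq_sqrt (by positivity)
    exact_mod_cast this
  rw [← hel_sum_aux _ _ _ _ _ _ _ hr (gram1_aux s n k₁ k₃ hs hn) (gram2_aux s n k₁ k₃ hs hn) _ hR]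
  simp only [dotRC_pol_aux, polA_opp_aux s n k₁ k₂ c hs h2, polB_opp_aux s n k₁ k₂ c h2,
    polA_opp_aux s n k₃ k₄ d hs h4, polB_opp_aux s n k₃ k₄ d h4, map_div₀, map_add, map_mul,
    Complex.conj_ofReal, Complex.conj_I, Complex.ofReal_neg, Complex.ofReal_one, map_neg, map_one]
  ring

lemma final_aux (H M κ φd s K₁ K₂ K₃ K₄ EL ER e₂ e₃ f₂ f₃ P T : ℝ)
    (hH : H ≠ 0) (hM : M ≠ 0) (hφ : φd ≠ 0) (hs : s ≠ 0) (h1 : K₁ ≠ 0) (h2 : K₂ ≠ 0)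
    (h3 : K₃ ≠ 0) (h4 : K₄ ≠ 0) (hL : EL ≠ 0) (hR : ER ≠ 0)
    (a1 a2 a3 a4 b1 b2 b3 b4 q : ℂ) (hq : q ^ 2 = 2)
    (key : a1 * a2 * a3 * a4 - b1 * b2 * b3 * b4 = Complex.I * (P : ℂ) * (T : ℂ)) :
    (((H ^ 6 / (2 * M ^ 2 * φd ^ 2) : ℝ) : ℂ) * q * a1 * a2 *
         ((-EL ^ 3 + EL * e₂ + e₃ : ℝ) : ℂ) / ((K₁ ^ 3 * K₂ ^ 3 * s ^ 3 * EL ^ 2 : ℝ) : ℂ)) *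
      ((1 * Real.pi * κ * H ^ 3 / (M ^ 2 * s ^ 3) : ℝ) : ℂ) *
      (((H ^ 6 / (2 * M ^ 2 * φd ^ 2) : ℝ) : ℂ) * q * a3 * a4 *
         ((-ER ^ 3 + ER * f₂ + f₃ : ℝ) : ℂ) / ((K₃ ^ 3 * K₄ ^ 3 * s ^ 3 * ER ^ 2 : ℝ) : ℂ)) /
      ((H ^ 2 / (M ^ 2 * s ^ 3) : ℝ) : ℂ) ^ 2 +
    (((H ^ 6 / (2 * M ^ 2 * φd ^ 2) : ℝ) : ℂ) * q * b1 * b2 *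
         ((-EL ^ 3 + EL * e₂ + e₃ : ℝ) : ℂ) / ((K₁ ^ 3 * K₂ ^ 3 * s ^ 3 * EL ^ 2 : ℝ) : ℂ)) *
      (((-1) * Real.pi * κ * H ^ 3 / (M ^ 2 * s ^ 3) : ℝ) : ℂ) *
      (((H ^ 6 / (2 * M ^ 2 * φd ^ 2) : ℝ) : ℂ) * q * b3 * b4 *
         ((-ER ^ 3 + ER * f₂ + f₃ : ℝ) : ℂ) / ((K₃ ^ 3 * K₄ ^ 3 * s ^ 3 * ER ^ 2 : ℝ) : ℂ)) /
      ((H ^ 2 / (M ^ 2 * s ^ 3) : ℝ) : ℂ) ^ 2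
    = Complex.I * (((H / φd) ^ 4 : ℝ) : ℂ) *
           ((Real.pi * κ * H ^ 7 / (2 * M ^ 2) : ℝ) : ℂ) *
           ((P / (K₁ * K₃) : ℝ) : ℂ) * ((T / (K₂ * K₄) : ℝ) : ℂ) *
           (((EL ^ 3 - EL * e₂ - e₃) * (ER ^ 3 - ER * f₂ - f₃) : ℝ) : ℂ) /
           (((K₁ * K₂ * K₃ * K₄) ^ 2 * s ^ 3 * EL ^ 2 * ER ^ 2 : ℝ) : ℂ) := by
  obtain ⟨X, hX⟩ : ∃ X : ℝ, EL ^ 3 - EL * e₂ - e₃ = X := ⟨_, rfl⟩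
  obtain ⟨Y, hY⟩ : ∃ Y : ℝ, ER ^ 3 - ER * f₂ - f₃ = Y := ⟨_, rfl⟩
  have hX' : -EL ^ 3 + EL * e₂ + e₃ = -X := by linarith
  have hY' : -ER ^ 3 + ER * f₂ + f₃ = -Y := by linarith
  rw [hX, hY, hX', hY']
  have hH' : (H : ℂ) ≠ 0 := by exact_mod_cast hH
  have hM' : (M : ℂ) ≠ 0 := by exact_mod_cast hM
  have hφ' : (φd : ℂ) ≠ 0 := by exact_mod_cast hφ
  have hs' : (s : ℂ) ≠ 0 := by exact_mod_cast hs
  have h1' : (K₁ : ℂ) ≠ 0 := by exact_mod_cast h1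
  have h2' : (K₂ : ℂ) ≠ 0 := by exact_mod_cast h2
  have h3' : (K₃ : ℂ) ≠ 0 := by exact_mod_cast h3
  have h4' : (K₄ : ℂ) ≠ 0 := by exact_mod_cast h4
  have hL' : (EL : ℂ) ≠ 0 := by exact_mod_cast hL
  have hR' : (ER : ℂ) ≠ 0 := by exact_mod_cast hR
  push_cast
  trans (q ^ 2 * (a1 * a2 * a3 * a4 - b1 * b2 * b3 * b4)) *
    (Real.pi * κ * H ^ 11 * X * Y / (4 * M ^ 2 * φd ^ 4 * (K₁ * K₂ * K₃ * K₄) ^ 3 * s ^ 3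
      * EL ^ 2 * ER ^ 2) : ℂ)
  · field_simp
    ring
  · rw [hq, key]
    field_simp
    ring

/-- The s-channel correlator-to-correlator factorisation (double copy) identity of
dynamical Chern–Simons gravity: the parity-odd curvature trispectrum, built from
the graviton power spectrum `B_γγ`, its parity-odd Chern–Simons correction
`δB^{(h)}_γγ`, and the Maldacena curvature–graviton mixed bispectra `B_L`, `B_R`,
takes the exact rational factorised form stated on the right-hand side. -/
theorem chernSimons_CCF_schannel
    (H M κ φd : ℝ) (hH : 0 < H) (hM : 0 < M) (hκ : 0 < κ) (hφd : 0 < φd)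
    (k₁ k₂ k₃ k₄ : Fin 3 → ℝ)
    (hk₁ : k₁ ≠ 0) (hk₂ : k₂ ≠ 0) (hk₃ : k₃ ≠ 0) (hk₄ : k₄ ≠ 0)
    (hsum : k₁ + k₂ + k₃ + k₄ = 0) (hs12 : k₁ + k₂ ≠ 0)
    (n : Fin 3 → ℝ) (hn : dot3 n n = 1)
    (hnpar : ¬ ∃ c : ℝ, n = c • unit3 (k₁ + k₂)) :
    (let s : ℝ := norm3 (k₁ + k₂)
     let shat : Fin 3 → ℝ := unit3 (k₁ + k₂)
     let K₁ : ℝ := norm3 k₁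
     let K₂ : ℝ := norm3 k₂
     let K₃ : ℝ := norm3 k₃
     let K₄ : ℝ := norm3 k₄
     let EL : ℝ := K₁ + K₂ + s
     let e₂ : ℝ := K₁ * K₂ + s * (K₁ + K₂)
     let e₃ : ℝ := K₁ * K₂ * s
     let ER : ℝ := K₃ + K₄ + s
     let f₂ : ℝ := K₃ * K₄ + s * (K₃ + K₄)
     let f₃ : ℝ := K₃ * K₄ * s
     -- graviton power spectrum
     let Bγγ : ℝ := H ^ 2 / (M ^ 2 * s ^ 3)
     -- parity-odd Chern–Simons correction to the graviton power spectrum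
     let δBγγ : ℝ → ℝ := fun h => h * Real.pi * κ * H ^ 3 / (M ^ 2 * s ^ 3)
     -- left mixed bispectrum
     let BL : ℝ → ℂ := fun h =>
       ((H ^ 6 / (2 * M ^ 2 * φd ^ 2) : ℝ) : ℂ) * ((Real.sqrt 2 : ℝ) : ℂ) *
         starRingEnd ℂ (dotRC k₁ (polVec h shat n)) *
         starRingEnd ℂ (dotRC k₂ (polVec h shat n)) *
         ((-EL ^ 3 + EL * e₂ + e₃ : ℝ) : ℂ) /
         ((K₁ ^ 3 * K₂ ^ 3 * s ^ 3 * EL ^ 2 : ℝ) : ℂ)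
     -- right mixed bispectrum
     let BR : ℝ → ℂ := fun h =>
       ((H ^ 6 / (2 * M ^ 2 * φd ^ 2) : ℝ) : ℂ) * ((Real.sqrt 2 : ℝ) : ℂ) *
         dotRC k₃ (polVec h shat n) * dotRC k₄ (polVec h shat n) *
         ((-ER ^ 3 + ER * f₂ + f₃ : ℝ) : ℂ) /
         ((K₃ ^ 3 * K₄ ^ 3 * s ^ 3 * ER ^ 2 : ℝ) : ℂ)
     BL 1 * ((δBγγ 1 : ℝ) : ℂ) * BR 1 / ((Bγγ : ℝ) : ℂ) ^ 2
       + BL (-1) * ((δBγγ (-1) : ℝ) : ℂ) * BR (-1) / ((Bγγ : ℝ) : ℂ) ^ 2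
       = Complex.I * (((H / φd) ^ 4 : ℝ) : ℂ) *
           ((Real.pi * κ * H ^ 7 / (2 * M ^ 2) : ℝ) : ℂ) *
           ((dot3 (unit3 k₁) (unit3 k₃)
               - dot3 (unit3 k₁) shat * dot3 (unit3 k₃) shat : ℝ) : ℂ) *
           ((dot3 shat (cross3 (unit3 k₂) (unit3 k₄)) : ℝ) : ℂ) *
           (((EL ^ 3 - EL * e₂ - e₃) * (ER ^ 3 - ER * f₂ - f₃) : ℝ) : ℂ) /
           (((K₁ * K₂ * K₃ * K₄) ^ 2 * s ^ 3 * EL ^ 2 * ER ^ 2 : ℝ) : ℂ)) := by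
  have hs := dot3_unit_self_aux hs12
  have ps := norm3_pos_aux hs12
  have p1 := norm3_pos_aux hk₁
  have p2 := norm3_pos_aux hk₂
  have p3 := norm3_pos_aux hk₃
  have p4 := norm3_pos_aux hk₄
  have hu : ∀ i, norm3 (k₁ + k₂) * unit3 (k₁ + k₂) i = k₁ i + k₂ i := fun i => by
    simp only [unit3, Pi.add_apply]
    field_simp
  have h2 : ∀ i, k₂ i = norm3 (k₁ + k₂) * unit3 (k₁ + k₂) i - k₁ i := fun i => by
    rw [hu]
    ring
  have h4 : ∀ i, k₄ i = (-norm3 (k₁ + k₂)) * unit3 (k₁ + k₂) i - k₃ i := fun i => by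
    have := congrFun hsum i
    simp only [Pi.add_apply, Pi.zero_apply] at this
    linarith [hu i]
  have key := hel_key_aux (unit3 (k₁ + k₂)) n k₁ k₂ k₃ k₄ _ _ hs hn hnpar h2 h4
  have d1 : dot3 (unit3 k₁) (unit3 k₃)
      - dot3 (unit3 k₁) (unit3 (k₁ + k₂)) * dot3 (unit3 k₃) (unit3 (k₁ + k₂))
      = (dot3 k₁ k₃ - dot3 k₁ (unit3 (k₁ + k₂)) * dot3 k₃ (unit3 (k₁ + k₂)))
        / (norm3 k₁ * norm3 k₃) := by
    generalize unit3 (k₁ + k₂) = u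
    simp only [dot3, unit3, Fin.sum_univ_three]
    field_simp
  have d2 : dot3 (unit3 (k₁ + k₂)) (cross3 (unit3 k₂) (unit3 k₄))
      = dot3 (unit3 (k₁ + k₂)) (cross3 k₂ k₄) / (norm3 k₂ * norm3 k₄) := by
    generalize unit3 (k₁ + k₂) = u
    simp [dot3, cross3, unit3, Fin.sum_univ_three]
    field_simp
  intro s shat K₁ K₂ K₃ K₄ EL e₂ e₃ ER f₂ f₃ Bγγ δBγγ BL BR
  have pEL : 0 < EL := by positivity
  have pER : 0 < ER := by positivity
  simp only [BL, BR, δBγγ, Bγγ]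
  rw [d1, d2]
  change _ = Complex.I * _ * _ * ((_ / (K₁ * K₃) : ℝ) : ℂ) * ((_ / (K₂ * K₄) : ℝ) : ℂ) * _ / _
  change _ = Complex.I * ((dot3 k₁ k₃ - dot3 k₁ shat * dot3 k₃ shat : ℝ) : ℂ)
        * ((dot3 shat (cross3 k₂ k₄) : ℝ) : ℂ) at key
  generalize (dot3 k₁ k₃ - dot3 k₁ _ * dot3 k₃ _) = P at key ⊢
  generalize dot3 _ (cross3 k₂ k₄) = T at key ⊢
  generalize starRingEnd ℂ (dotRC k₁ (polVec 1 shat n)) = a1 at key ⊢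
  generalize starRingEnd ℂ (dotRC k₂ (polVec 1 shat n)) = a2 at key ⊢
  generalize dotRC k₃ (polVec 1 shat n) = a3 at key ⊢
  generalize dotRC k₄ (polVec 1 shat n) = a4 at key ⊢
  generalize starRingEnd ℂ (dotRC k₁ (polVec (-1) shat n)) = b1 at key ⊢
  generalize starRingEnd ℂ (dotRC k₂ (polVec (-1) shat n)) = b2 at key ⊢
  generalize dotRC k₃ (polVec (-1) shat n) = b3 at key ⊢
  generalize dotRC k₄ (polVec (-1) shat n) = b4 at key ⊢
  have hsq : ((Real.sqrt 2 : ℝ) : ℂ) ^ 2 = 2 := by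
    exact_mod_cast Real.sq_sqrt (by norm_num : (0:ℝ) ≤ 2)
  exact final_aux H M κ φd s K₁ K₂ K₃ K₄ EL ER e₂ e₃ f₂ f₃ P T hH.ne' hM.ne' hφd.ne' ps.ne'
    p1.ne' p2.ne' p3.ne' p4.ne' pEL.ne' pER.ne' a1 a2 a3 a4 b1 b2 b3 b4 _ hsq key

end
end
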